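/- Let M and E be symmetric n×n real matrices, M̂ = M + E, with orthonormal eigenbasis (u_k)_{k=1}^n of M having eigenvalues λ_k, and let û_j be a unit eigenvector of M̂ with eigenvalue λ̂_j. Suppose λ_j is a simple eigenvalue (λ_k ≠ λ_j for all k ≠ j). Then for any vector a ∈ ℝ^n: a^T û_j − (a^T u_j)(u_j^T û_j) − Σ_{k≠j} (u_j^T E u_k)/(λ_j − λ_k) · (a^T u_k) = Σ_{k≠j} ((û_j − u_j)^T E u_k)/(λ_j − λ_k) · (a^T u_k) + Σ_{k≠j} (λ_j − λ̂_j)/(λ_j − λ_k) · (û_j^T u_k)(u_k^T a). -/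

import Mathlib

open Matrix

/-!
Expand `û` in the eigenbasis of `M`. Testing `E = (M + E) - M` between `û` and `u k` gives
`û ⬝ᵥ E *ᵥ u k = (λ̂ - λ k) * (û ⬝ᵥ u k)`. Writing `λ̂ - λ k = (λ j - λ k) - (λ j - λ̂)` and
dividing by the gap `λ j - λ k` solves for the coefficient `û ⬝ᵥ u k`. The argument only pairs a
left eigenvector of `M + E` with right eigenvectors of `M`, so it applies to any diagonalizable
`M`, with an eigenbasis and its dual basis in place of an orthonormal eigenbasis.
-/

section

variable {ι : Type*} [Fintype ι]

theorem dotProduct_eq_sum_of_biorthogonal {R : Type*} [Semiring R] [IsStablyFiniteRing R]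
    [DecidableEq ι] {u v : ι → ι → R} (huv : ∀ k l, u k ⬝ᵥ v l = if k = l then 1 else 0)
    (a b : ι → R) :
    a ⬝ᵥ b = ∑ k, (a ⬝ᵥ v k) * (u k ⬝ᵥ b) := by
  have mul_transpose : of u * (of v)ᵀ = 1 := Matrix.ext huv
  have transpose_mul : (of v)ᵀ * of u = 1 := mul_eq_one_comm.mp mul_transpose
  calc a ⬝ᵥ b = a ⬝ᵥ ((of v)ᵀ * of u) *ᵥ b := by rw [transpose_mul, one_mulVec]
    _ = (a ᵥ* (of v)ᵀ) ⬝ᵥ (of u *ᵥ b) := by rw [← mulVec_mulVec, dotProduct_mulVec]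
    _ = ∑ k, (a ⬝ᵥ v k) * (u k ⬝ᵥ b) := rfl

theorem dotProduct_mulVec_perturbation {R : Type*} [CommRing R] {M E : Matrix ι ι R}
    {x w : ι → R} {μ ν : R} (hx : M *ᵥ x = μ • x) (hw : w ᵥ* (M + E) = ν • w) :
    w ⬝ᵥ E *ᵥ x = (ν - μ) * (w ⬝ᵥ x) :=
  calc w ⬝ᵥ E *ᵥ x = w ᵥ* (M + E) ⬝ᵥ x - w ⬝ᵥ M *ᵥ x := by
        rw [← dotProduct_mulVec, add_mulVec, dotProduct_add, add_sub_cancel_left]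
    _ = (ν - μ) * (w ⬝ᵥ x) := by
        rw [hx, hw, smul_dotProduct, dotProduct_smul, smul_eq_mul, smul_eq_mul, sub_mul]

variable {K : Type*} [Field K]

theorem dotProduct_eq_div_add_div_mul {M E : Matrix ι ι K} {x w : ι → K} {μ ν z : K}
    (hx : M *ᵥ x = μ • x) (hw : w ᵥ* (M + E) = ν • w) (hz : z ≠ μ) :
    w ⬝ᵥ x = (w ⬝ᵥ E *ᵥ x) / (z - μ) + (z - ν) / (z - μ) * (w ⬝ᵥ x) := by
  have gap_ne_zero : z - μ ≠ 0 := sub_ne_zero.mpr hz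
  rw [dotProduct_mulVec_perturbation hx hw]
  field_simp
  ring

theorem stmt_1_general [DecidableEq ι] {M E : Matrix ι ι K} {u v : ι → ι → K} {lam : ι → K}
    (huv : ∀ k l, u k ⬝ᵥ v l = if k = l then 1 else 0) (hu : ∀ k, M *ᵥ u k = lam k • u k)
    {j : ι} (hsimple : ∀ k, k ≠ j → lam k ≠ lam j)
    {w : ι → K} {ν : K} (hw : w ᵥ* (M + E) = ν • w) (a : ι → K) :
    a ⬝ᵥ w - (a ⬝ᵥ v j) * (u j ⬝ᵥ w)
        - ∑ k ∈ Finset.univ.erase j, (v j ⬝ᵥ E *ᵥ u k) / (lam j - lam k) * (a ⬝ᵥ v k)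
      = ∑ k ∈ Finset.univ.erase j, ((w - v j) ⬝ᵥ E *ᵥ u k) / (lam j - lam k) * (a ⬝ᵥ v k)
        + ∑ k ∈ Finset.univ.erase j,
            (lam j - ν) / (lam j - lam k) * ((w ⬝ᵥ u k) * (v k ⬝ᵥ a)) := by
  have expansion : a ⬝ᵥ w - (a ⬝ᵥ v j) * (u j ⬝ᵥ w)
      = ∑ k ∈ Finset.univ.erase j, (a ⬝ᵥ v k) * (u k ⬝ᵥ w) := by
    rw [dotProduct_eq_sum_of_biorthogonal huv a w,
      ← Finset.add_sum_erase _ _ (Finset.mem_univ j), add_sub_cancel_left]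
  rw [expansion, ← Finset.sum_sub_distrib, ← Finset.sum_add_distrib]
  refine Finset.sum_congr rfl fun k hk => ?_
  have coefficient := dotProduct_eq_div_add_div_mul (hu k) hw
    (hsimple k (Finset.ne_of_mem_erase hk)).symm
  rw [sub_dotProduct, dotProduct_comm (u k) w, dotProduct_comm (v k) a]
  linear_combination (a ⬝ᵥ v k) * coefficient

end

/-- First-order deterministic expansion for linear forms of eigenvectors. -/
theorem stmt_1 {n : ℕ} (M E : Matrix (Fin n) (Fin n) ℝ)
    (hM : M.IsSymm) (hE : E.IsSymm)
    (u : Fin n → Fin n → ℝ) (lam : Fin n → ℝ)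
    (horth : ∀ k l, u k ⬝ᵥ u l = if k = l then 1 else 0)
    (hu : ∀ k, M.mulVec (u k) = lam k • u k)
    (j : Fin n) (hsimple : ∀ k, k ≠ j → lam k ≠ lam j)
    (uhat : Fin n → ℝ) (lamhat : ℝ)
    (hunit : uhat ⬝ᵥ uhat = 1)
    (huhat : (M + E).mulVec uhat = lamhat • uhat)
    (a : Fin n → ℝ) :
    a ⬝ᵥ uhat - (a ⬝ᵥ u j) * (u j ⬝ᵥ uhat)
        - ∑ k ∈ Finset.univ.erase j, (u j ⬝ᵥ E.mulVec (u k)) / (lam j - lam k) * (a ⬝ᵥ u k)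
      = ∑ k ∈ Finset.univ.erase j, ((uhat - u j) ⬝ᵥ E.mulVec (u k)) / (lam j - lam k) * (a ⬝ᵥ u k)
        + ∑ k ∈ Finset.univ.erase j,
            (lam j - lamhat) / (lam j - lam k) * ((uhat ⬝ᵥ u k) * (u k ⬝ᵥ a)) := by
  have huhat_left : uhat ᵥ* (M + E) = lamhat • uhat := by
    rw [← mulVec_transpose, (hM.add hE).eq, huhat]
  exact stmt_1_general horth hu hsimple huhat_left a
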